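/- The line in direction (1, √2, √6) projects to a dense orbit on the 3-torus: the range of the map t ↦ ((t : AddCircle 1), (√2·t : AddCircle 1), (√6·t : AddCircle 1)), t ∈ ℝ, is dense in (AddCircle 1) × (AddCircle 1) × (AddCircle 1). -/

import Mathlib

/-!
The distance to a subgroup `H` of a torus is an `H`-invariant continuous function, and translating
a function by `g` multiplies its `n`-th Fourier coefficient by the value of the `n`-th character at
`g`. Hence if no nontrivial character is trivial on `H`, only the constant coefficient survives:
the distance is constant, namely `0`, and `H` is dense. On the line `t ↦ ω t` the `n`-th
character is `t ↦ exp (2πi ⟨n, ω⟩ t)`, which is trivial only if `⟨n, ω⟩ = 0`, so the line is dense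
as soon as the coordinates of `ω` are rationally independent. For `ω = (1, √2, √6)`, squaring a
relation `b √2 + c √6 = -a` leaves the irrational term `2 b c √12`, which forces `b c = 0`.
-/

open MeasureTheory UnitAddTorus
open scoped FourierTransform

section Characters

variable {d : Type*} [Fintype d]

lemma mFourier_apply_add (n : d → ℤ) (x y : UnitAddTorus d) :
    mFourier n (x + y) = mFourier n x * mFourier n y := by
  simp only [mFourier, ContinuousMap.coe_mk, Pi.add_apply, fourier_apply, smul_add,
    AddCircle.toCircle_add, Circle.coe_mul, Finset.prod_mul_distrib]

lemma mFourier_mul_mFourier_neg (n : d → ℤ) (x : UnitAddTorus d) :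
    mFourier n x * mFourier (-n) x = 1 := by
  rw [← mFourier_add, add_neg_cancel, mFourier_zero, ContinuousMap.one_apply]

lemma mFourier_apply_coe (n : d → ℤ) (x : d → ℝ) :
    mFourier n (fun i ↦ (x i : UnitAddCircle)) = 𝐞 (∑ i, n i * x i) := by
  simp only [mFourier, ContinuousMap.coe_mk, fourier_coe_apply, ← Complex.exp_sum,
    Real.fourierChar_apply]
  push_cast
  simp only [Finset.mul_sum, Finset.sum_mul]
  congr! 2 with i
  ring

end Characters

section FourierCoefficients

-- `mFourierCoeff` integrates against the probability Haar measure, which Mathlib only makes the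
-- volume of `UnitAddCircle` locally.
attribute [local instance] instMeasureSpaceUnitAddCircle instIsAddHaarMeasureUnitAddCircleVolume

variable {d E : Type*} [Fintype d] [NormedAddCommGroup E] [NormedSpace ℂ E]

lemma mFourierCoeff_comp_add_right (f : UnitAddTorus d → E) (g : UnitAddTorus d) (n : d → ℤ) :
    mFourierCoeff (fun x ↦ f (x + g)) n = mFourier n g • mFourierCoeff f n := by
  have translate_char (x : UnitAddTorus d) :
      mFourier (-n) x = mFourier n g * mFourier (-n) (x + g) := by
    rw [mFourier_apply_add, mul_left_comm, mFourier_mul_mFourier_neg, mul_one]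
  calc mFourierCoeff (fun x ↦ f (x + g)) n
      = ∫ x, mFourier n g • mFourier (-n) (x + g) • f (x + g) := by
        simp only [mFourierCoeff, smul_smul, ← translate_char]
    _ = mFourier n g • ∫ x, mFourier (-n) (x + g) • f (x + g) := integral_smul _ _
    _ = mFourier n g • mFourierCoeff f n := by
        rw [integral_add_right_eq_self (fun x ↦ mFourier (-n) x • f x) g, mFourierCoeff]

lemma mFourierCoeff_eq_zero_of_forall_add_eq {f : UnitAddTorus d → E} {g : UnitAddTorus d}
    {n : d → ℤ} (hf : ∀ x, f (x + g) = f x) (hg : mFourier n g ≠ 1) : mFourierCoeff f n = 0 := by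
  have h : mFourierCoeff f n = mFourier n g • mFourierCoeff f n := by
    rw [← mFourierCoeff_comp_add_right]
    simp only [hf]
  by_contra h0
  exact hg (smul_left_injective ℂ h0 (by simpa using h.symm))

lemma apply_eq_mFourierCoeff_zero_of_forall_ne_zero {f : C(UnitAddTorus d, ℂ)}
    (hf : ∀ n ≠ 0, mFourierCoeff f n = 0) (x : UnitAddTorus d) : f x = mFourierCoeff f 0 := by
  have hsum := hasSum_mFourier_series_apply_of_summable
    (summable_of_ne_finset_zero (s := {0}) (by simpa using hf)) x
  have hsum_single := hasSum_single (f := fun n ↦ mFourierCoeff f n • mFourier n x) 0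
    fun n hn ↦ by rw [hf n hn, zero_smul]
  simpa [mFourier_zero] using hsum.unique hsum_single

end FourierCoefficients

section Density

variable {d : Type*}

theorem dense_addSubgroup_of_forall_exists_mFourier_ne_one [Fintype d]
    {H : AddSubgroup (UnitAddTorus d)} (hH : ∀ n ≠ 0, ∃ g ∈ H, mFourier n g ≠ 1) :
    Dense (H : Set (UnitAddTorus d)) := by
  -- The quotient norm is the distance to `H`.
  let f : C(UnitAddTorus d, ℂ) :=
    ⟨fun x ↦ (‖(x : UnitAddTorus d ⧸ H)‖ : ℂ), by fun_prop⟩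
  have invariant {g} (hg : g ∈ H) (x) : f (x + g) = f x := by
    simp [f, (QuotientAddGroup.eq_zero_iff g).2 hg]
  have coeff_eq_zero : ∀ n ≠ 0, mFourierCoeff f n = 0 := fun n hn ↦
    let ⟨_, hg, hng⟩ := hH n hn
    mFourierCoeff_eq_zero_of_forall_add_eq (invariant hg) hng
  intro x
  rw [← QuotientAddGroup.norm_mk_eq_zero_iff_mem_closure]
  have constant : f x = f 0 := by
    simp only [apply_eq_mFourierCoeff_zero_of_forall_ne_zero coeff_eq_zero]
  simpa [f] using constant

/-- The line through the origin of the torus `(ℝ/ℤ)ᵈ` with direction `ω`, as a one-parameter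
subgroup. -/
def torusLine (ω : d → ℝ) : ℝ →+ UnitAddTorus d where
  toFun t i := (ω i * t : ℝ)
  map_zero' := by ext; simp
  map_add' s t := by ext; simp [mul_add]

lemma mFourier_torusLine [Fintype d] (n : d → ℤ) (ω : d → ℝ) (t : ℝ) :
    mFourier n (torusLine ω t) = 𝐞 ((∑ i, n i * ω i) * t) := by
  simp only [Finset.sum_mul, mul_assoc]
  exact mFourier_apply_coe n (fun i ↦ ω i * t)

theorem denseRange_torusLine [Finite d] {ω : d → ℝ} (hω : LinearIndependent ℚ ω) :
    DenseRange (torusLine ω) := by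
  have := Fintype.ofFinite d
  rw [DenseRange, ← AddMonoidHom.coe_range]
  refine dense_addSubgroup_of_forall_exists_mFourier_ne_one fun n hn ↦ ?_
  have frequency_ne_zero : ∑ i, n i * ω i ≠ 0 := by
    contrapose! hn
    exact funext (Fintype.linearIndependent_iff.1 (hω.restrict_scalars' ℤ) n (by simpa using hn))
  obtain ⟨s, hs⟩ := AddChar.ne_one_iff.1 Real.fourierChar_ne_one
  refine ⟨torusLine ω ((∑ i, n i * ω i)⁻¹ * s), ⟨_, rfl⟩, ?_⟩
  rwa [mFourier_torusLine, mul_inv_cancel_left₀ frequency_ne_zero, Ne, Circle.coe_eq_one]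

end Density

section RationalIndependence

lemma eq_zero_of_ratCast_add_ratCast_mul_eq_zero {x : ℝ} (hx : Irrational x) {p q : ℚ}
    (h : p + q * x = 0) : q = 0 := by
  by_contra hq
  exact (hx.ratCast_mul hq).ne_rat (-p) (by push_cast; linarith)

theorem linearIndependent_one_sqrt_sqrt {m n : ℕ} (hm : ¬IsSquare m) (hn : ¬IsSquare n)
    (hmn : ¬IsSquare (m * n)) : LinearIndependent ℚ ![1, √m, √n] := by
  rw [← irrational_sqrt_natCast_iff] at hm hn hmn
  have coeffs_eq_zero (a b c : ℚ) (h : a + b * √m + c * √n = 0) : a = 0 ∧ b = 0 ∧ c = 0 := by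
    have squared :
        ((b ^ 2 * m + c ^ 2 * n - a ^ 2 : ℚ) : ℝ) + (2 * b * c : ℚ) * √(m * n : ℕ) = 0 := by
      have sq_m : √(m : ℝ) ^ 2 = m := Real.sq_sqrt m.cast_nonneg
      have sq_n : √(n : ℝ) ^ 2 = n := Real.sq_sqrt n.cast_nonneg
      push_cast
      rw [Real.sqrt_mul m.cast_nonneg]
      linear_combination (b * √m + c * √n - a) * h - b ^ 2 * sq_m - c ^ 2 * sq_n
    have hbc : b = 0 ∨ c = 0 := by
      simpa using eq_zero_of_ratCast_add_ratCast_mul_eq_zero hmn squared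
    rcases hbc with rfl | rfl
    · have hc : c = 0 :=
        eq_zero_of_ratCast_add_ratCast_mul_eq_zero hn (p := a) (by simpa using h)
      simpa [hc] using h
    · have hb : b = 0 :=
        eq_zero_of_ratCast_add_ratCast_mul_eq_zero hm (p := a) (by simpa using h)
      simpa [hb] using h
  rw [Fintype.linearIndependent_iff]
  intro r hr
  have h := coeffs_eq_zero (r 0) (r 1) (r 2)
    (by simpa [Fin.sum_univ_three, Rat.smul_def] using hr)
  simpa [Fin.forall_fin_succ] using h

end RationalIndependence

/-- The line in direction `(1, √2, √6)` projects to a dense orbit on the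
3-torus `(ℝ/ℤ)³`. -/
theorem dense_line_orbit_on_three_torus :
    Dense (Set.range (fun t : ℝ =>
      ((↑t, ↑(Real.sqrt 2 * t), ↑(Real.sqrt 6 * t)) :
        AddCircle (1 : ℝ) × AddCircle (1 : ℝ) × AddCircle (1 : ℝ)))) := by
  have independent : LinearIndependent ℚ ![1, √2, √6] := by
    simpa using linearIndependent_one_sqrt_sqrt (m := 2) (n := 6)
      (by norm_num) (by norm_num) (by norm_num)
  let coords : UnitAddTorus (Fin 3) → UnitAddCircle × UnitAddCircle × UnitAddCircle :=
    fun x ↦ (x 0, x 1, x 2)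
  have coords_surjective : Function.Surjective coords := fun ⟨a, b, c⟩ ↦ ⟨![a, b, c], rfl⟩
  have coords_line := coords_surjective.denseRange.comp (denseRange_torusLine independent)
    (by fun_prop)
  simpa [coords, torusLine, DenseRange, Function.comp_def] using coords_line
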